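/- arXiv:2110.06174 — 3 statements merged into one kernel-verified Lean document; each statement's English description precedes it below -/
import Mathlib

section
/- Let Γ : ℝ⁶ → ℝ be a twice continuously differentiable Hamiltonian satisfying Γ(S_f x) = Γ(x) and Γ(S_r x) = Γ(x) for all x, and let γ be a 12τ-periodic solution of ẋ = J∇Γ(x) (τ > 0) satisfying γ(s + 2τ) = S_f γ(s) and γ(−s + 2τ) = S_r γ(s) for all s. Let Y : ℝ → M₆(ℝ) satisfy Y′(s) = J·D²Γ(γ(s))·Y(s) with Y(0) = Y₀ invertible, and set B = Y(τ) and W = Y₀⁻¹ S_fᵀ S_r Y₀ B⁻¹ S_r B. Then the monodromy matrix satisfies X(12τ) = Y₀ W⁶ Y₀⁻¹, where X is the solution of the same linear matrix equation with X(0) = I. -/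
open Matrix

/-- The standard `6 × 6` symplectic matrix `J = [[0, I],[−I, 0]]` with `3 × 3` blocks. -/
def J6 : Matrix (Fin 6) (Fin 6) ℝ :=
  !![0, 0, 0, 1, 0, 0;
     0, 0, 0, 0, 1, 0;
     0, 0, 0, 0, 0, 1;
     -1, 0, 0, 0, 0, 0;
     0, -1, 0, 0, 0, 0;
     0, 0, -1, 0, 0, 0]

/-- The time-preserving symmetry matrix `S_f = diag(R, R)`, `R = [[0,0,1],[−1,0,0],[0,1,0]]`. -/
def Sf : Matrix (Fin 6) (Fin 6) ℝ :=
  !![0, 0, 1, 0, 0, 0;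
     -1, 0, 0, 0, 0, 0;
     0, 1, 0, 0, 0, 0;
     0, 0, 0, 0, 0, 1;
     0, 0, 0, -1, 0, 0;
     0, 0, 0, 0, 1, 0]

/-- The time-reversing symmetry matrix `S_r = diag(S, −S)`, `S = [[0,1,0],[1,0,0],[0,0,1]]`. -/
def Sr : Matrix (Fin 6) (Fin 6) ℝ :=
  !![0, 1, 0, 0, 0, 0;
     1, 0, 0, 0, 0, 0;
     0, 0, 1, 0, 0, 0;
     0, 0, 0, 0, -1, 0;
     0, 0, 0, -1, 0, 0;
     0, 0, 0, 0, 0, -1]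

/-- The gradient of `f : ℝ⁶ → ℝ` at `x`, componentwise via the Fréchet derivative. -/
noncomputable def gradV (f : (Fin 6 → ℝ) → ℝ) (x : Fin 6 → ℝ) : Fin 6 → ℝ :=
  fun i => fderiv ℝ f x (Pi.single i 1)

/-- The Hessian matrix `D²f(x)` of `f : ℝ⁶ → ℝ` at `x`. -/
noncomputable def hessM (f : (Fin 6 → ℝ) → ℝ) (x : Fin 6 → ℝ) : Matrix (Fin 6) (Fin 6) ℝ :=
  Matrix.of fun i j => fderiv ℝ (fun y => fderiv ℝ f y (Pi.single j 1)) x (Pi.single i 1)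


lemma vec_unique (A : ℝ → Matrix (Fin 6) (Fin 6) ℝ) (hA : ∀ i j, Continuous fun s => A s i j)
    (f g : ℝ → Fin 6 → ℝ)
    (hf : ∀ s, HasDerivAt f (A s *ᵥ f s) s) (hg : ∀ s, HasDerivAt g (A s *ᵥ g s) s)
    (t₀ : ℝ) (h0 : f t₀ = g t₀) (t : ℝ) : f t = g t := by
  have hc : Continuous fun s => ∑ i, ∑ j, |A s i j| :=
    continuous_finsetSum _ fun i _ => continuous_finsetSum _ fun j _ => (hA i j).abs
  set a := min t₀ t - 1
  set b := max t₀ t + 1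
  obtain ⟨C, hC⟩ := (isCompact_Icc (a := a) (b := b)).exists_bound_of_continuousOn hc.continuousOn
  have hbound : ∀ (s : ℝ) (v : Fin 6 → ℝ), ‖A s *ᵥ v‖ ≤ (∑ i, ∑ j, |A s i j|) * ‖v‖ := by
    intro s v
    have hn : 0 ≤ ∑ i, ∑ j, |A s i j| :=
      Finset.sum_nonneg fun i _ => Finset.sum_nonneg fun j _ => abs_nonneg _
    rw [pi_norm_le_iff_of_nonneg (mul_nonneg hn (norm_nonneg _))]
    intro i
    have h1 : ‖(A s *ᵥ v) i‖ ≤ (∑ j, |A s i j|) * ‖v‖ := by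
      rw [Finset.sum_mul]
      have h2 : (A s *ᵥ v) i = ∑ j, A s i j * v j := rfl
      rw [h2]
      refine (norm_sum_le (E := ℝ) _ _).trans (Finset.sum_le_sum fun j _ => ?_)
      rw [norm_mul]
      exact mul_le_mul_of_nonneg_left (norm_le_pi_norm v j) (norm_nonneg _)
    refine h1.trans (mul_le_mul_of_nonneg_right ?_ (norm_nonneg _))
    exact Finset.single_le_sum (f := fun i => ∑ j, |A s i j|)
      (fun i _ => Finset.sum_nonneg fun j _ => abs_nonneg _) (Finset.mem_univ i)
  have hlip : ∀ s ∈ Set.Ioo a b, LipschitzOnWith C.toNNReal (fun v => A s *ᵥ v) Set.univ := by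
    intro s hs
    refine LipschitzWith.lipschitzOnWith (LipschitzWith.of_dist_le_mul fun x y => ?_)
    rw [dist_eq_norm, dist_eq_norm, ← Matrix.mulVec_sub]
    refine (hbound s _).trans (mul_le_mul_of_nonneg_right ?_ (norm_nonneg _))
    exact ((le_abs_self _).trans (hC s (Set.Ioo_subset_Icc_self hs))).trans (Real.le_coe_toNNReal C)
  have hat : a < t₀ ∧ a < t := ⟨by have := min_le_left t₀ t; simp only [a]; linarith,
    by have := min_le_right t₀ t; simp only [a]; linarith⟩
  have hbt : t₀ < b ∧ t < b := ⟨by have := le_max_left t₀ t; simp only [b]; linarith,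
    by have := le_max_right t₀ t; simp only [b]; linarith⟩
  exact ODE_solution_unique_of_mem_Icc (v := fun s v => A s *ᵥ v) (s := fun _ => Set.univ)
    hlip ⟨hat.1, hbt.1⟩
    (fun s _ => (hf s).continuousAt.continuousWithinAt) (fun s _ => hf s) (fun _ _ => trivial)
    (fun s _ => (hg s).continuousAt.continuousWithinAt) (fun s _ => hg s) (fun _ _ => trivial)
    h0 ⟨hat.2.le, hbt.2.le⟩

/-- Entrywise solution of the linear matrix equation. -/
def IsSol (A : ℝ → Matrix (Fin 6) (Fin 6) ℝ) (M : ℝ → Matrix (Fin 6) (Fin 6) ℝ) : Prop :=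
  ∀ (s : ℝ) (i j : Fin 6), HasDerivAt (fun u => M u i j) ((A s * M s) i j) s

lemma mat_unique (A : ℝ → Matrix (Fin 6) (Fin 6) ℝ) (hA : ∀ i j, Continuous fun s => A s i j)
    (M N : ℝ → Matrix (Fin 6) (Fin 6) ℝ) (hM : IsSol A M) (hN : IsSol A N)
    (t₀ : ℝ) (h0 : M t₀ = N t₀) (t : ℝ) : M t = N t := by
  ext i j
  have := vec_unique A hA (fun s i => M s i j) (fun s i => N s i j)
    (fun s => hasDerivAt_pi.2 fun i => hM s i j) (fun s => hasDerivAt_pi.2 fun i => hN s i j)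
    t₀ (by rw [h0]) t
  exact congrFun this i

lemma hasDerivAt_mul_const_mat {M : ℝ → Matrix (Fin 6) (Fin 6) ℝ} {M' : Matrix (Fin 6) (Fin 6) ℝ}
    {s : ℝ} (h : ∀ i j, HasDerivAt (fun u => M u i j) (M' i j) s)
    (P Q : Matrix (Fin 6) (Fin 6) ℝ) (i j : Fin 6) :
    HasDerivAt (fun u => (P * M u * Q) i j) ((P * M' * Q) i j) s := by
  simp only [Matrix.mul_apply]
  exact HasDerivAt.fun_sum fun k _ =>
    (HasDerivAt.fun_sum fun l _ => (h l k).const_mul (P i l)).mul_const (Q k j)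

lemma isUnit_of_sol (A : ℝ → Matrix (Fin 6) (Fin 6) ℝ) (hA : ∀ i j, Continuous fun s => A s i j)
    (M : ℝ → Matrix (Fin 6) (Fin 6) ℝ) (hM : IsSol A M) (h0 : M 0 = 1) (t : ℝ) :
    IsUnit (M t) := by
  rw [← Matrix.mulVec_injective_iff_isUnit]
  intro x y hxy
  have key : ∀ x : Fin 6 → ℝ, ∀ s, HasDerivAt (fun s => M s *ᵥ x) (A s *ᵥ (M s *ᵥ x)) s := by
    intro x s
    rw [hasDerivAt_pi]
    intro i
    rw [Matrix.mulVec_mulVec]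
    simp only [Matrix.mulVec, dotProduct]
    exact HasDerivAt.fun_sum fun k _ => (hM s i k).mul_const (x k)
  have := vec_unique A hA _ _ (key x) (key y) t hxy 0
  simpa [h0] using this

lemma hess_apply (f : (Fin 6 → ℝ) → ℝ) (hf : ContDiff ℝ 2 f) (x : Fin 6 → ℝ) (i j : Fin 6) :
    hessM f x i j = fderiv ℝ (fderiv ℝ f) x (Pi.single i 1) (Pi.single j 1) := by
  have hd : DifferentiableAt ℝ (fderiv ℝ f) x :=
    ((hf.fderiv_right (m := 1) (by norm_num)).differentiable (by norm_num)) x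
  simp only [hessM, Matrix.of_apply]
  rw [fderiv_clm_apply hd (differentiableAt_const _)]
  simp

lemma hess_continuous (f : (Fin 6 → ℝ) → ℝ) (hf : ContDiff ℝ 2 f) (i j : Fin 6) :
    Continuous fun x => hessM f x i j := by
  simp only [hess_apply f hf]
  have h1 : ContDiff ℝ 1 (fderiv ℝ f) := hf.fderiv_right (m := 1) (by norm_num)
  have h2 : Continuous (fderiv ℝ (fderiv ℝ f)) := h1.continuous_fderiv (by norm_num)
  exact (h2.clm_apply continuous_const).clm_apply continuous_const

lemma hess_bilin (f : (Fin 6 → ℝ) → ℝ) (hf : ContDiff ℝ 2 f) (x u v : Fin 6 → ℝ) :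
    fderiv ℝ (fderiv ℝ f) x u v = u ⬝ᵥ (hessM f x *ᵥ v) := by
  conv_lhs => rw [← Finset.univ_sum_single u, ← Finset.univ_sum_single v]
  have hs : ∀ (w : Fin 6 → ℝ) i, (Pi.single i (w i) : Fin 6 → ℝ) = w i • Pi.single i 1 := by
    intro w i; rw [← Pi.single_smul]; simp
  simp only [hs, map_sum, map_smul, _root_.sum_apply, _root_.smul_apply,
    ← hess_apply f hf, dotProduct, Matrix.mulVec, Finset.mul_sum, smul_eq_mul]
  rw [Finset.sum_comm]
  refine Finset.sum_congr rfl fun i _ => Finset.sum_congr rfl fun j _ => ?_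
  ring

lemma hess_symm (f : (Fin 6 → ℝ) → ℝ) (hf : ContDiff ℝ 2 f) (S : Matrix (Fin 6) (Fin 6) ℝ)
    (hS : ∀ x, f (S *ᵥ x) = f x) (x : Fin 6 → ℝ) :
    hessM f x = Sᵀ * hessM f (S *ᵥ x) * S := by
  let L : (Fin 6 → ℝ) →L[ℝ] (Fin 6 → ℝ) := LinearMap.toContinuousLinearMap (Matrix.toLin' S)
  have hL : ∀ x, L x = S *ᵥ x := fun x => rfl
  have hd0 : Differentiable ℝ f := hf.differentiable (by norm_num)
  have hd1 : Differentiable ℝ (fderiv ℝ f) :=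
    (hf.fderiv_right (m := 1) (by norm_num)).differentiable (by norm_num)
  have e1 : ∀ y v, fderiv ℝ f y v = fderiv ℝ f (L y) (L v) := by
    intro y v
    have h := ((hd0 (L y)).hasFDerivAt.comp y L.hasFDerivAt)
    have hfe : f ∘ L = f := funext hS
    rw [hfe] at h
    rw [h.fderiv]; rfl
  have e2 : ∀ y u v, fderiv ℝ (fderiv ℝ f) y u v = fderiv ℝ (fderiv ℝ f) (L y) (L u) (L v) := by
    intro y u v
    have h1 : HasFDerivAt (fun z => fderiv ℝ f (L z) (L v)) _ y :=
      ((hd1 (L y)).hasFDerivAt.comp y L.hasFDerivAt).clm_apply (hasFDerivAt_const (L v) y)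
    have h2 : HasFDerivAt (fun z => fderiv ℝ f z v) _ y :=
      (hd1 y).hasFDerivAt.clm_apply (hasFDerivAt_const v y)
    simp only [← e1] at h1
    have := congrArg (fun T => T u) (h2.unique h1)
    simpa using this
  ext i j
  have := e2 x (Pi.single i 1) (Pi.single j 1)
  rw [hess_bilin f hf, hess_bilin f hf, hL, hL, hL] at this
  have h2 : (S *ᵥ Pi.single i 1) ⬝ᵥ (hessM f (S *ᵥ x) *ᵥ (S *ᵥ Pi.single j 1))
      = Pi.single i 1 ⬝ᵥ ((Sᵀ * hessM f (S *ᵥ x) * S) *ᵥ Pi.single j 1) := by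
    rw [← Matrix.mulVec_mulVec, ← Matrix.mulVec_mulVec, Matrix.dotProduct_mulVec _ Sᵀ,
      Matrix.vecMul_transpose]
  rw [h2] at this
  simpa using this

lemma Sf_orth : Sf * Sfᵀ = 1 := by
  ext i j; fin_cases i <;> fin_cases j <;> simp [Sf, Matrix.mul_apply, Fin.sum_univ_succ]

lemma Sr_sq : Sr * Sr = 1 := by
  ext i j; fin_cases i <;> fin_cases j <;> simp [Sr, Matrix.mul_apply, Fin.sum_univ_succ]

lemma Sr_tr : Srᵀ = Sr := by
  ext i j; fin_cases i <;> fin_cases j <;> simp [Sr]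

lemma Sf_J : Sf * J6 = J6 * Sf := by
  ext i j; fin_cases i <;> fin_cases j <;> simp [Sf, J6, Matrix.mul_apply, Fin.sum_univ_succ]

lemma Sr_J : Sr * J6 = -(J6 * Sr) := by
  ext i j; fin_cases i <;> fin_cases j <;> simp [Sr, J6, Matrix.mul_apply, Fin.sum_univ_succ]

lemma Sf_cube : Sf ^ 3 = -1 := by
  rw [pow_succ, pow_two]
  ext i j; fin_cases i <;> fin_cases j <;> simp [Sf, Matrix.mul_apply, Fin.sum_univ_succ]

lemma Sf_six : Sf ^ 6 = 1 := by
  have h : Sf ^ (3 * 2) = 1 := by rw [pow_mul, Sf_cube]; simp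
  exact h

/-- Factorization of the monodromy matrix of the cubic orbit: with `B = Y(τ)` and
`W = Y₀⁻¹ S_fᵀ S_r Y₀ B⁻¹ S_r B`, the monodromy matrix satisfies `X(12τ) = Y₀ W⁶ Y₀⁻¹`. -/
theorem monodromy_factorization (τ : ℝ) (hτ : 0 < τ)
    (Γ : (Fin 6 → ℝ) → ℝ) (hΓ : ContDiff ℝ 2 Γ)
    (hΓf : ∀ x, Γ (Sf.mulVec x) = Γ x)
    (hΓr : ∀ x, Γ (Sr.mulVec x) = Γ x)
    (γ : ℝ → Fin 6 → ℝ)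
    (hsol : ∀ s : ℝ, HasDerivAt γ (J6.mulVec (gradV Γ (γ s))) s)
    (hper : ∀ s : ℝ, γ (s + 12 * τ) = γ s)
    (hsymf : ∀ s : ℝ, γ (s + 2 * τ) = Sf.mulVec (γ s))
    (hsymr : ∀ s : ℝ, γ (-s + 2 * τ) = Sr.mulVec (γ s))
    (Y₀ : Matrix (Fin 6) (Fin 6) ℝ) (hY₀ : IsUnit Y₀)
    (Y : ℝ → Matrix (Fin 6) (Fin 6) ℝ)
    (hY0 : Y 0 = Y₀)
    (hY : ∀ (s : ℝ) (i j : Fin 6),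
      HasDerivAt (fun u => Y u i j) ((J6 * hessM Γ (γ s) * Y s) i j) s)
    (X : ℝ → Matrix (Fin 6) (Fin 6) ℝ)
    (hX0 : X 0 = 1)
    (hX : ∀ (s : ℝ) (i j : Fin 6),
      HasDerivAt (fun u => X u i j) ((J6 * hessM Γ (γ s) * X s) i j) s) :
    X (12 * τ) =
      Y₀ * (Y₀⁻¹ * Sfᵀ * Sr * Y₀ * (Y τ)⁻¹ * Sr * Y τ) ^ 6 * Y₀⁻¹ := by
  set A : ℝ → Matrix (Fin 6) (Fin 6) ℝ := fun s => J6 * hessM Γ (γ s) with hAdef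
  have hX' : IsSol A X := hX
  have hY' : IsSol A Y := hY
  have hγ : Continuous γ := continuous_iff_continuousAt.2 fun s => (hsol s).continuousAt
  have hA : ∀ i j, Continuous fun s => A s i j := by
    intro i j
    simp only [hAdef, Matrix.mul_apply]
    exact continuous_finsetSum _ fun k _ =>
      continuous_const.mul ((hess_continuous Γ hΓ k j).comp hγ)
  have hfo' : Sfᵀ * Sf = 1 := mul_eq_one_comm.1 Sf_orth
  -- symmetry of the coefficient matrix
  have hAf : ∀ s, A (s + 2 * τ) = Sf * A s * Sfᵀ := by
    intro s
    have h := hess_symm Γ hΓ Sf hΓf (γ s)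
    simp only [hAdef]
    rw [hsymf, h]
    calc J6 * hessM Γ (Sf *ᵥ γ s)
        = J6 * (Sf * Sfᵀ) * hessM Γ (Sf *ᵥ γ s) * (Sf * Sfᵀ) := by rw [Sf_orth]; simp
      _ = (J6 * Sf) * Sfᵀ * hessM Γ (Sf *ᵥ γ s) * Sf * Sfᵀ := by simp only [mul_assoc]
      _ = _ := by rw [← Sf_J]; simp only [mul_assoc]
  have hAr : ∀ s, A (-s + 2 * τ) = -(Sr * A s * Sr) := by
    intro s
    have h := hess_symm Γ hΓ Sr hΓr (γ s)
    simp only [hAdef]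
    rw [hsymr, h, Sr_tr]
    calc J6 * hessM Γ (Sr *ᵥ γ s)
        = J6 * (Sr * Sr) * hessM Γ (Sr *ᵥ γ s) * (Sr * Sr) := by rw [Sr_sq]; simp
      _ = (J6 * Sr) * Sr * hessM Γ (Sr *ᵥ γ s) * Sr * Sr := by simp only [mul_assoc]
      _ = _ := by
        rw [show J6 * Sr = -(Sr * J6) by rw [Sr_J, neg_neg]]
        simp only [mul_assoc, neg_mul]
  -- forward symmetry of the flow
  have hXf : ∀ s, Sfᵀ * X (s + 2 * τ) = X s * (Sfᵀ * X (2 * τ)) := by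
    intro s
    refine mat_unique A hA (fun s => Sfᵀ * X (s + 2 * τ)) (fun s => X s * (Sfᵀ * X (2 * τ)))
      ?_ ?_ 0 (by simp [hX0]) s
    · intro s i j
      have h := hasDerivAt_mul_const_mat (M := fun u => X (u + 2 * τ))
        (M' := A (s + 2 * τ) * X (s + 2 * τ)) (s := s)
        (fun i j => (hX' (s + 2 * τ) i j).comp_add_const s (2 * τ)) Sfᵀ 1 i j
      simp only [mul_one] at h
      have e : Sfᵀ * (A (s + 2 * τ) * X (s + 2 * τ)) = A s * (Sfᵀ * X (s + 2 * τ)) := by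
        rw [hAf]
        simp only [← Matrix.mul_assoc]
        rw [hfo', one_mul]
      rw [e] at h
      exact h
    · intro s i j
      have h := hasDerivAt_mul_const_mat (fun i j => hX' s i j) 1 (Sfᵀ * X (2 * τ)) i j
      simpa only [one_mul, mul_assoc] using h
  -- reversing symmetry of the flow
  have hXr : ∀ s, Sr * X (-s + 2 * τ) = X s * (Sr * X (2 * τ)) := by
    intro s
    refine mat_unique A hA (fun s => Sr * X (-s + 2 * τ)) (fun s => X s * (Sr * X (2 * τ)))
      ?_ ?_ 0 (by simp [hX0]) s
    · intro s i j
      have hd : ∀ i j, HasDerivAt (fun u => X (-u + 2 * τ) i j)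
          ((-(A (-s + 2 * τ) * X (-s + 2 * τ))) i j) s := by
        intro i j
        have h1 : HasDerivAt (fun u : ℝ => -u + 2 * τ) (-1) s :=
          ((hasDerivAt_id s).neg).add_const _
        have h2 := (hX' (-s + 2 * τ) i j).comp s h1
        simpa [Function.comp_def] using h2
      have h := hasDerivAt_mul_const_mat (M := fun u => X (-u + 2 * τ)) hd Sr 1 i j
      simp only [mul_one] at h
      have e : Sr * -(A (-s + 2 * τ) * X (-s + 2 * τ)) = A s * (Sr * X (-s + 2 * τ)) := by
        rw [hAr]
        simp only [neg_mul, neg_neg, ← Matrix.mul_assoc]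
        rw [Sr_sq, one_mul]
      rw [e] at h
      exact h
    · intro s i j
      have h := hasDerivAt_mul_const_mat (fun i j => hX' s i j) 1 (Sr * X (2 * τ)) i j
      simpa only [one_mul, mul_assoc] using h
  have hYX : Y τ = X τ * Y₀ := by
    refine mat_unique A hA Y (fun s => X s * Y₀) hY' ?_ 0 (by simp [hX0, hY0]) τ
    intro s i j
    have h := hasDerivAt_mul_const_mat (fun i j => hX' s i j) 1 Y₀ i j
    simpa only [one_mul, mul_assoc] using h
  have hXu : IsUnit (X τ) := isUnit_of_sol A hA X hX' hX0 τ
  have hXi : (X τ)⁻¹ * X τ = 1 := Matrix.nonsing_inv_mul _ ((Matrix.isUnit_iff_isUnit_det _).1 hXu)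
  have hYi : Y₀⁻¹ * Y₀ = 1 := Matrix.nonsing_inv_mul _ ((Matrix.isUnit_iff_isUnit_det _).1 hY₀)
  have hYi' : Y₀ * Y₀⁻¹ = 1 := mul_eq_one_comm.1 hYi
  have h2τ : X (2 * τ) = Sr * (X τ)⁻¹ * Sr * X τ := by
    have h := hXr τ
    rw [show -τ + 2 * τ = τ by ring] at h
    calc X (2 * τ) = (Sr * Sr) * X (2 * τ) := by rw [Sr_sq, one_mul]
      _ = Sr * (((X τ)⁻¹ * X τ) * (Sr * X (2 * τ))) := by rw [hXi, one_mul, mul_assoc]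
      _ = Sr * ((X τ)⁻¹ * (Sr * X τ)) := by rw [h]; simp only [mul_assoc]
      _ = _ := by simp only [mul_assoc]
  set P := Sfᵀ * X (2 * τ) with hP
  have hpow : ∀ k : ℕ, X (k * (2 * τ)) = Sf ^ k * P ^ k := by
    intro k
    induction k with
    | zero => simp [hX0]
    | succ k ih =>
      have h := hXf (k * (2 * τ))
      rw [show ((k + 1 : ℕ) : ℝ) * (2 * τ) = k * (2 * τ) + 2 * τ by push_cast; ring]
      calc X (k * (2 * τ) + 2 * τ) = Sf * (Sfᵀ * X (k * (2 * τ) + 2 * τ)) := by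
            rw [← Matrix.mul_assoc, Sf_orth, one_mul]
        _ = _ := by rw [h, ih, pow_succ', pow_succ]; simp only [mul_assoc]
  have h12 := hpow 6
  rw [Sf_six, one_mul, show ((6 : ℕ) : ℝ) * (2 * τ) = 12 * τ by push_cast; ring] at h12
  have hW : Y₀⁻¹ * Sfᵀ * Sr * Y₀ * (Y τ)⁻¹ * Sr * Y τ = Y₀⁻¹ * P * Y₀ := by
    rw [hYX, Matrix.mul_inv_rev, hP, h2τ]
    calc _ = Y₀⁻¹ * Sfᵀ * Sr * (Y₀ * Y₀⁻¹) * (X τ)⁻¹ * Sr * (X τ * Y₀) := by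
          simp only [mul_assoc]
      _ = _ := by rw [hYi', mul_one]; simp only [mul_assoc]
  have hWk : ∀ k : ℕ, Y₀ * (Y₀⁻¹ * P * Y₀) ^ k = P ^ k * Y₀ := by
    intro k
    induction k with
    | zero => simp
    | succ k ih =>
      rw [pow_succ, ← mul_assoc, ih, pow_succ]
      calc _ = P ^ k * (Y₀ * Y₀⁻¹) * P * Y₀ := by simp only [mul_assoc]
        _ = _ := by rw [hYi', mul_one]
  rw [hW, hWk, mul_assoc, hYi', mul_one, h12]
end

section
/- Let δ = √2/2 and let Y₀ be the 6×6 matrix with rows (1,0,0,0,0,0), (0,0,−δ,0,δ,0), (0,0,δ,0,δ,0), (0,0,0,1,0,0), (0,−δ,0,0,0,−δ), (0,−δ,0,0,0,δ). Then for every real 6×6 symplectic matrix B, the matrix W = Y₀⁻¹ S_fᵀ S_r Y₀ B⁻¹ S_r B satisfies: there exists a real 3×3 matrix K with ½(W + W⁻¹) = [[Kᵀ, 0],[0, K]] in 3×3 blocks. In particular, −Y₀⁻¹ S_fᵀ S_r Y₀ = Λ, where Λ = [[I, 0],[0, −I]] in 3×3 blocks. -/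
open Matrix

/-- The diagonal matrix `Λ = diag(I, -I)`. -/
def Lam6 : Matrix (Fin 6) (Fin 6) ℝ := Matrix.diagonal ![1, 1, 1, -1, -1, -1]

lemma J6_sq : J6 * J6 = -1 := by
  ext i j
  fin_cases i <;> fin_cases j <;> simp [J6, Matrix.mul_apply, Fin.sum_univ_succ, Matrix.one_apply]

lemma J6_Sr : J6 * Sr = -(Srᵀ * J6) := by
  ext i j
  fin_cases i <;> fin_cases j <;> simp [J6, Sr, Matrix.mul_apply, Fin.sum_univ_succ]

lemma Lam6_sq : Lam6 * Lam6 = 1 := by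
  rw [Lam6, Matrix.diagonal_mul_diagonal, ← Matrix.diagonal_one]
  congr 1
  ext i
  fin_cases i <;> simp

lemma Lam6_blocks : Lam6 = (Matrix.fromBlocks (1 : Matrix (Fin 3) (Fin 3) ℝ) 0 0 (-1)).submatrix
        ((finSumFinEquiv (m := 3) (n := 3)).symm : Fin (3 + 3) → Fin 3 ⊕ Fin 3)
        (finSumFinEquiv (m := 3) (n := 3)).symm := by
  ext i j
  obtain ⟨i, rfl⟩ := (finSumFinEquiv (m := 3) (n := 3)).surjective i
  obtain ⟨j, rfl⟩ := (finSumFinEquiv (m := 3) (n := 3)).surjective j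
  rw [Matrix.submatrix_apply, Equiv.symm_apply_apply, Equiv.symm_apply_apply]
  rcases i with i | i <;> rcases j with j | j <;> fin_cases i <;> fin_cases j <;>
    simp [Lam6, Matrix.diagonal_apply, Fin.ext_iff] <;> rfl

/-- Anticommutator with `Λ` is block diagonal; the Hamiltonian relation ties the blocks. -/
lemma block_form (D : Matrix (Fin 6) (Fin 6) ℝ) (hD : J6 * D = -(Dᵀ * J6)) :
    ∃ K : Matrix (Fin 3) (Fin 3) ℝ,
      (1 / 2 : ℝ) • (-(Lam6 * D) + -(D * Lam6)) =
          (Matrix.fromBlocks Kᵀ 0 0 K).submatrix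
            ((finSumFinEquiv (m := 3) (n := 3)).symm : Fin (3 + 3) → Fin 3 ⊕ Fin 3)
            (finSumFinEquiv (m := 3) (n := 3)).symm := by
  have key : ∀ i j : Fin 3, D (Fin.natAdd 3 i) (Fin.natAdd 3 j) =
      -D (Fin.castAdd 3 j) (Fin.castAdd 3 i) := by
    intro i j
    have h := congrFun (congrFun hD (Fin.castAdd 3 i)) (Fin.natAdd 3 j)
    fin_cases i <;> fin_cases j <;>
      simpa [J6, Matrix.mul_apply, Fin.sum_univ_succ] using h
  have l1 : ∀ i : Fin 3, (![1, 1, 1, -1, -1, -1] : Fin 6 → ℝ) (Fin.castAdd 3 i) = 1 := by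
    intro i; fin_cases i <;> rfl
  have l2 : ∀ i : Fin 3, (![1, 1, 1, -1, -1, -1] : Fin 6 → ℝ) (Fin.natAdd 3 i) = -1 := by
    intro i; fin_cases i <;> rfl
  refine ⟨Matrix.of fun i j => D (Fin.natAdd 3 i) (Fin.natAdd 3 j), ?_⟩
  ext i j
  obtain ⟨i, rfl⟩ := (finSumFinEquiv (m := 3) (n := 3)).surjective i
  obtain ⟨j, rfl⟩ := (finSumFinEquiv (m := 3) (n := 3)).surjective j
  rw [Matrix.submatrix_apply, Equiv.symm_apply_apply, Equiv.symm_apply_apply]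
  simp only [Lam6, Matrix.smul_apply, Matrix.add_apply, Matrix.neg_apply,
    Matrix.diagonal_mul, Matrix.mul_diagonal, smul_eq_mul]
  rcases i with i | i <;> rcases j with j | j <;>
    simp only [finSumFinEquiv_apply_left, finSumFinEquiv_apply_right,
      Matrix.fromBlocks_apply₁₁, Matrix.fromBlocks_apply₁₂, Matrix.fromBlocks_apply₂₁,
      Matrix.fromBlocks_apply₂₂, Matrix.transpose_apply, Matrix.of_apply, Matrix.zero_apply, l1, l2]
  · rw [key]; ring
  · ring
  · ring
  · ring

/-- With `δ = √2/2` and the specific orthogonal matrix `Y₀` below, for every real symplectic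
matrix `B` the matrix `W = Y₀⁻¹ S_fᵀ S_r Y₀ B⁻¹ S_r B` satisfies
`½(W + W⁻¹) = [[Kᵀ, 0],[0, K]]` in `3 × 3` blocks for some real `3 × 3` matrix `K`;
in particular `−Y₀⁻¹ S_fᵀ S_r Y₀ = Λ` where `Λ = [[I, 0],[0, −I]]`. -/
theorem Y0_gives_W_form (δ : ℝ) (hδ : δ = Real.sqrt 2 / 2)
    (Y₀ : Matrix (Fin 6) (Fin 6) ℝ)
    (hY₀ : Y₀ = !![1, 0, 0, 0, 0, 0;
                   0, 0, -δ, 0, δ, 0;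
                   0, 0, δ, 0, δ, 0;
                   0, 0, 0, 1, 0, 0;
                   0, -δ, 0, 0, 0, -δ;
                   0, -δ, 0, 0, 0, δ]) :
    (∀ B : Matrix (Fin 6) (Fin 6) ℝ, Bᵀ * J6 * B = J6 →
      ∃ K : Matrix (Fin 3) (Fin 3) ℝ,
        (1 / 2 : ℝ) • ((Y₀⁻¹ * Sfᵀ * Sr * Y₀ * B⁻¹ * Sr * B) +
            (Y₀⁻¹ * Sfᵀ * Sr * Y₀ * B⁻¹ * Sr * B)⁻¹) =
          (Matrix.fromBlocks Kᵀ 0 0 K).submatrix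
            ((finSumFinEquiv (m := 3) (n := 3)).symm : Fin (3 + 3) → Fin 3 ⊕ Fin 3)
            (finSumFinEquiv (m := 3) (n := 3)).symm) ∧
    -(Y₀⁻¹ * Sfᵀ * Sr * Y₀) =
      (Matrix.fromBlocks (1 : Matrix (Fin 3) (Fin 3) ℝ) 0 0 (-1)).submatrix
        ((finSumFinEquiv (m := 3) (n := 3)).symm : Fin (3 + 3) → Fin 3 ⊕ Fin 3)
        (finSumFinEquiv (m := 3) (n := 3)).symm := by
  have hd : δ * δ = 1 / 2 := by
    have := Real.mul_self_sqrt (show (0 : ℝ) ≤ 2 by norm_num)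
    rw [hδ]; linarith
  have hYY : Y₀ᵀ * Y₀ = 1 := by
    rw [hY₀]
    ext i j
    fin_cases i <;> fin_cases j <;>
      simp [Matrix.mul_apply, Fin.sum_univ_succ, Matrix.one_apply] <;> linarith
  have hinv : Y₀⁻¹ = Y₀ᵀ := Matrix.inv_eq_left_inv hYY
  have hcomm : Sfᵀ * Sr * Y₀ = -(Y₀ * Lam6) := by
    rw [hY₀, Lam6]
    ext i j
    rw [Matrix.neg_apply, Matrix.mul_diagonal]
    fin_cases i <;> fin_cases j <;>
      simp [Sf, Sr, Matrix.mul_apply, Fin.sum_univ_succ]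
  have hM : Y₀⁻¹ * Sfᵀ * Sr * Y₀ = -Lam6 := by
    rw [hinv, Matrix.mul_assoc Y₀ᵀ, Matrix.mul_assoc Y₀ᵀ, hcomm, Matrix.mul_neg,
      ← Matrix.mul_assoc, hYY, Matrix.one_mul]
  refine ⟨?_, by rw [hM, neg_neg, Lam6_blocks]⟩
  intro B hB
  have hBl : -(J6 * Bᵀ * J6) * B = 1 := by
    rw [Matrix.neg_mul, Matrix.mul_assoc, Matrix.mul_assoc, ← Matrix.mul_assoc Bᵀ, hB, J6_sq,
      neg_neg]
  have hBi : B⁻¹ = -(J6 * Bᵀ * J6) := Matrix.inv_eq_left_inv hBl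
  have hBr : B * B⁻¹ = 1 := by rw [hBi]; exact mul_eq_one_comm.mp hBl
  have hBl2 : B⁻¹ * B = 1 := by rw [hBi]; exact hBl
  have hJB : J6 * B⁻¹ = Bᵀ * J6 := by
    rw [hBi, Matrix.mul_neg, Matrix.mul_assoc J6 Bᵀ, ← Matrix.mul_assoc J6 J6, J6_sq]
    simp
  have hJB2 : (B⁻¹)ᵀ * J6 = J6 * B := by
    have h1 : (B⁻¹)ᵀ * Bᵀ = 1 := by rw [← Matrix.transpose_mul, hBr, Matrix.transpose_one]
    calc (B⁻¹)ᵀ * J6 = (B⁻¹)ᵀ * (Bᵀ * J6 * B) := by rw [hB]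
      _ = ((B⁻¹)ᵀ * Bᵀ) * (J6 * B) := by simp only [Matrix.mul_assoc]
      _ = J6 * B := by rw [h1, Matrix.one_mul]
  have hDD : (B⁻¹ * Sr * B) * (B⁻¹ * Sr * B) = 1 := by
    calc (B⁻¹ * Sr * B) * (B⁻¹ * Sr * B) = B⁻¹ * Sr * (B * B⁻¹) * Sr * B := by
          simp only [Matrix.mul_assoc]
      _ = B⁻¹ * (Sr * Sr) * B := by rw [hBr]; simp only [Matrix.mul_assoc, Matrix.one_mul]
      _ = 1 := by rw [Sr_sq, Matrix.mul_one, hBl2]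
  have hJD : J6 * (B⁻¹ * Sr * B) = -((B⁻¹ * Sr * B)ᵀ * J6) := by
    calc J6 * (B⁻¹ * Sr * B) = (J6 * B⁻¹) * Sr * B := by simp only [Matrix.mul_assoc]
      _ = Bᵀ * (J6 * Sr) * B := by rw [hJB]; simp only [Matrix.mul_assoc]
      _ = -(Bᵀ * Srᵀ * (J6 * B)) := by
          rw [J6_Sr]; simp only [Matrix.mul_assoc, Matrix.neg_mul, Matrix.mul_neg]
      _ = -((B⁻¹ * Sr * B)ᵀ * J6) := by
          rw [← hJB2]; simp only [Matrix.transpose_mul, Matrix.mul_assoc]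
  have hW : Y₀⁻¹ * Sfᵀ * Sr * Y₀ * B⁻¹ * Sr * B = -(Lam6 * (B⁻¹ * Sr * B)) := by
    rw [hM]; simp only [Matrix.mul_assoc, Matrix.neg_mul]
  rw [hW]
  generalize B⁻¹ * Sr * B = D at hDD hJD
  have hWi : (-(Lam6 * D))⁻¹ = -(D * Lam6) := by
    apply Matrix.inv_eq_left_inv
    rw [neg_mul_neg, Matrix.mul_assoc, ← Matrix.mul_assoc Lam6, Lam6_sq, Matrix.one_mul,
      hDD]
  rw [hWi]
  exact block_form D hJD
end

section
/- Let Γ : ℝ⁶ → ℝ be twice continuously differentiable, let γ be a solution of ẋ = J∇Γ(x) whose derivative γ′ is differentiable, let Y₀ be an orthogonal 6×6 matrix, and let Y : ℝ → M₆(ℝ) satisfy Y′(s) = J·D²Γ(γ(s))·Y(s) with Y(0) = Y₀. If γ′(0) ≠ 0 and S_fᵀ γ′(2τ) = γ′(0) for some τ > 0, then the vector v = Y₀ᵀ γ′(0) satisfies W v = v, where W = Y₀ᵀ S_fᵀ Y(2τ); that is, v is an eigenvector of W with eigenvalue 1. -/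
open Matrix

/-- Hessian entries in terms of the second Fréchet derivative. -/
lemma hessM_eq (Γ : (Fin 6 → ℝ) → ℝ) (hΓ : ContDiff ℝ 2 Γ) (x : Fin 6 → ℝ) (i j : Fin 6) :
    hessM Γ x i j = fderiv ℝ (fderiv ℝ Γ) x (Pi.single i 1) (Pi.single j 1) := by
  have h1 : ContDiff ℝ 1 (fderiv ℝ Γ) := hΓ.fderiv_right (by norm_num)
  have hd : HasFDerivAt (fderiv ℝ Γ) (fderiv ℝ (fderiv ℝ Γ) x) x :=
    ((h1.differentiable (by norm_num)) x).hasFDerivAt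
  have h2 := hd.clm_apply (hasFDerivAt_const (Pi.single j (1 : ℝ) : Fin 6 → ℝ) x)
  simp only [hessM, Matrix.of_apply]
  rw [h2.fderiv]
  simp

lemma hessM_continuous (Γ : (Fin 6 → ℝ) → ℝ) (hΓ : ContDiff ℝ 2 Γ) :
    Continuous (hessM Γ) := by
  have h1 : ContDiff ℝ 1 (fderiv ℝ Γ) := hΓ.fderiv_right (by norm_num)
  have h2 : Continuous (fderiv ℝ (fderiv ℝ Γ)) := h1.continuous_fderiv (by norm_num)
  refine continuous_matrix fun i j => ?_
  simp only [hessM_eq Γ hΓ]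
  fun_prop

/-- Chain rule for the gradient along a curve. -/
lemma gradV_hasDerivAt (Γ : (Fin 6 → ℝ) → ℝ) (hΓ : ContDiff ℝ 2 Γ) (γ : ℝ → Fin 6 → ℝ)
    (w : Fin 6 → ℝ) (s : ℝ) (h : HasDerivAt γ w s) :
    HasDerivAt (fun u => gradV Γ (γ u)) ((hessM Γ (γ s)).mulVec w) s := by
  have h1 : ContDiff ℝ 1 (fderiv ℝ Γ) := hΓ.fderiv_right (by norm_num)
  have hd : HasFDerivAt (fderiv ℝ Γ) (fderiv ℝ (fderiv ℝ Γ) (γ s)) (γ s) :=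
    ((h1.differentiable (by norm_num)) (γ s)).hasFDerivAt
  have hsym : IsSymmSndFDerivAt ℝ Γ (γ s) :=
    hΓ.contDiffAt.isSymmSndFDerivAt (by simp)
  rw [hasDerivAt_pi]
  intro i
  have h3 := (hd.comp_hasDerivAt s h).clm_apply
    (hasDerivAt_const s (Pi.single i (1 : ℝ) : Fin 6 → ℝ))
  refine h3.congr_deriv ?_
  simp only [map_zero, add_zero, Matrix.mulVec, dotProduct, hessM_eq Γ hΓ]
  rw [hsym w]
  conv_lhs => rw [pi_eq_sum_univ' w]
  simp [map_sum, mul_comm]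

/-- If `γ` solves `ẋ = J∇Γ(x)` with `γ′` differentiable, `Y₀` is orthogonal, `Y` solves the
linearization along `γ` with `Y(0) = Y₀`, `γ′(0) ≠ 0`, and `S_fᵀ γ′(2τ) = γ′(0)` for some
`τ > 0`, then `v = Y₀ᵀ γ′(0)` is a fixed vector (eigenvector with eigenvalue `1`) of
`W = Y₀ᵀ S_fᵀ Y(2τ)`. -/
theorem eigenvector_one (Γ : (Fin 6 → ℝ) → ℝ) (hΓ : ContDiff ℝ 2 Γ)
    (γ : ℝ → Fin 6 → ℝ)
    (hsol : ∀ s : ℝ, HasDerivAt γ (J6.mulVec (gradV Γ (γ s))) s)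
    (hγ' : Differentiable ℝ (deriv γ))
    (Y₀ : Matrix (Fin 6) (Fin 6) ℝ) (horth : Y₀ᵀ * Y₀ = 1)
    (Y : ℝ → Matrix (Fin 6) (Fin 6) ℝ)
    (hY0 : Y 0 = Y₀)
    (hY : ∀ (s : ℝ) (i j : Fin 6),
      HasDerivAt (fun u => Y u i j) ((J6 * hessM Γ (γ s) * Y s) i j) s)
    (τ : ℝ) (hτ : 0 < τ)
    (hne : deriv γ 0 ≠ 0)
    (hrel : Sfᵀ.mulVec (deriv γ (2 * τ)) = deriv γ 0) :
    (Y₀ᵀ * Sfᵀ * Y (2 * τ)).mulVec (Y₀ᵀ.mulVec (deriv γ 0)) =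
      Y₀ᵀ.mulVec (deriv γ 0) := by
  have hder : deriv γ = fun s => J6.mulVec (gradV Γ (γ s)) := funext fun s => (hsol s).deriv
  have hγc : Continuous γ := continuous_iff_continuousAt.2 fun s => (hsol s).continuousAt
  let L : Matrix (Fin 6) (Fin 6) ℝ →ₗ[ℝ] ((Fin 6 → ℝ) →L[ℝ] (Fin 6 → ℝ)) :=
    (LinearMap.toContinuousLinearMap (𝕜 := ℝ) (E := Fin 6 → ℝ)).toLinearMap ∘ₗ
      (Matrix.toLin' (R := ℝ) (m := Fin 6) (n := Fin 6)).toLinearMap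
  have hLc : Continuous L := L.continuous_of_finiteDimensional
  have hLa : ∀ M v, L M v = M.mulVec v := fun M v => by simp [L]
  have hAc : Continuous fun s => L (J6 * hessM Γ (γ s)) :=
    hLc.comp (continuous_const.matrix_mul ((hessM_continuous Γ hΓ).comp hγc))
  obtain ⟨C, hC⟩ := (isCompact_Icc (a := (0 : ℝ)) (b := 2 * τ)).exists_bound_of_continuousOn
    hAc.continuousOn
  have hmulVec : ∀ (M : Matrix (Fin 6) (Fin 6) ℝ) (f : ℝ → Fin 6 → ℝ) (w : Fin 6 → ℝ) (s : ℝ),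
      HasDerivAt f w s → HasDerivAt (fun u => M.mulVec (f u)) (M.mulVec w) s := by
    intro M f w s h
    have := (L M).hasFDerivAt.comp_hasDerivAt s h
    simpa [hLa, Function.comp_def] using this
  -- the velocity solves the linearized equation
  have hg : ∀ s, HasDerivAt (deriv γ) (L (J6 * hessM Γ (γ s)) (deriv γ s)) s := by
    intro s
    have h1 := hmulVec J6 _ _ s (gradV_hasDerivAt Γ hΓ γ _ s (hsol s))
    rw [hLa, ← Matrix.mulVec_mulVec, hder]
    exact h1
  -- so does `Y v`
  set v := Y₀ᵀ.mulVec (deriv γ 0) with hv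
  have hf : ∀ s, HasDerivAt (fun u => (Y u).mulVec v)
      (L (J6 * hessM Γ (γ s)) ((Y s).mulVec v)) s := by
    intro s
    rw [hLa, Matrix.mulVec_mulVec, hasDerivAt_pi]
    intro i
    simp only [Matrix.mulVec, dotProduct]
    exact HasDerivAt.fun_sum fun j _ => (hY s i j).mul_const (v j)
  have h0 : (Y 0).mulVec v = deriv γ 0 := by
    rw [hY0, hv, Matrix.mulVec_mulVec, mul_eq_one_comm.1 horth, Matrix.one_mulVec]
  have key := ODE_solution_unique_of_mem_Icc_right (K := C.toNNReal) (a := 0) (b := 2 * τ)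
    (v := fun s x => L (J6 * hessM Γ (γ s)) x) (s := fun _ => Set.univ)
    (f := fun u => (Y u).mulVec v) (g := deriv γ)
    (fun t ht => ((L (J6 * hessM Γ (γ t))).lipschitz.weaken (by
      rw [← NNReal.coe_le_coe]
      exact (hC t ⟨ht.1, ht.2.le⟩).trans (Real.le_coe_toNNReal C))).lipschitzOnWith)
    (fun t _ => (hf t).continuousAt.continuousWithinAt)
    (fun t _ => (hf t).hasDerivWithinAt) (fun _ _ => Set.mem_univ _)
    (fun t _ => (hg t).continuousAt.continuousWithinAt)
    (fun t _ => (hg t).hasDerivWithinAt) (fun _ _ => Set.mem_univ _) h0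
  have hend : (Y (2 * τ)).mulVec v = deriv γ (2 * τ) := key ⟨by linarith, le_rfl⟩
  rw [← Matrix.mulVec_mulVec, hend, ← Matrix.mulVec_mulVec, hrel]
end
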